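/- The syntactic congruence of the path language has at most |Q|² + 2 classes: let Q be a finite type with initial state q₀ ∈ Q and final states F ⊆ Q, and let L be the associated path language over the alphabet Q × Q. Let ≈ be the syntactic congruence of L on List (Q × Q), defined by x ≈ y iff for all u, v : List (Q × Q), u ++ x ++ v ∈ L ↔ u ++ y ++ v ∈ L. Then the quotient of List (Q × Q) by ≈ has at most (card Q)^2 + 2 elements. -/

import Mathlib

/-- The path language over the alphabet `Q × Q` of state pairs: a word belongs
to it iff it is empty and `q0 ∈ F`, or it is nonempty, starts in `q0`, its
adjacent letters are continuous, and it ends in a final state. -/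
def PathLang {Q : Type*} (q0 : Q) (F : Set Q) : Set (List (Q × Q)) :=
  {x : List (Q × Q) |
    (x = [] ∧ q0 ∈ F) ∨
    (∃ h : x ≠ [],
      (x.head h).1 = q0 ∧
      x.Chain' (fun p q => p.2 = q.1) ∧
      (x.getLast h).2 ∈ F)}

/-- The syntactic congruence of the path language. -/
def synSetoid {Q : Type*} (q0 : Q) (F : Set Q) : Setoid (List (Q × Q)) where
  r x y := ∀ u v : List (Q × Q), u ++ x ++ v ∈ PathLang q0 F ↔ u ++ y ++ v ∈ PathLang q0 F
  iseqv := by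
    refine ⟨fun x u v => Iff.rfl, fun h u v => (h u v).symm,
      fun h1 h2 u v => (h1 u v).trans (h2 u v)⟩

open Classical in
noncomputable def plStep {Q : Type*} (s : Option Q) (p : Q × Q) : Option Q :=
  if s = some p.1 then some p.2 else none

open Classical in
noncomputable def plDec {Q : Type*} : Option (Option (Q × Q)) → Option Q → Option Q
  | none, s => s
  | some none, _ => none
  | some (some p), s => plStep s p

theorem plStep_none {Q : Type*} (x : List (Q × Q)) : x.foldl plStep none = none := by
  induction x with
  | nil => rfl
  | cons p t ih => simpa [plStep] using ih

theorem mem_pathLang_iff {Q : Type*} (F : Set Q) (x : List (Q × Q)) : ∀ q0 : Q,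
    x ∈ PathLang q0 F ↔ ∃ q ∈ F, x.foldl plStep (some q0) = some q := by
  induction x with
  | nil => intro q0; simp [PathLang]
  | cons p t ih =>
    intro q0
    by_cases h : q0 = p.1
    · subst h
      have h2 : (p :: t).foldl plStep (some p.1) = t.foldl plStep (some p.2) := by
        simp [plStep]
      rw [h2, ← ih p.2]
      cases t with
      | nil => simp [PathLang, List.Chain']
      | cons r t =>
        simp [PathLang, List.Chain', List.isChain_cons_cons]
        grind
    · have h2 : (p :: t).foldl plStep (some q0) = none := by
        simp [plStep, h, plStep_none]
      rw [h2]
      simp [PathLang, Ne.symm h]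

theorem exists_code {Q : Type*} (x : List (Q × Q)) :
    ∃ c, ∀ s, x.foldl plStep s = plDec c s := by
  induction x using List.reverseRecOn with
  | nil => exact ⟨none, fun s => rfl⟩
  | append_singleton t p ih =>
    obtain ⟨c, hc⟩ := ih
    simp only [List.foldl_append, hc, List.foldl_cons, List.foldl_nil]
    match c with
    | none => exact ⟨some (some p), fun s => rfl⟩
    | some none => exact ⟨some none, fun s => by simp [plDec, plStep]⟩
    | some (some r) =>
      by_cases h : r.2 = p.1
      · refine ⟨some (some (r.1, p.2)), fun s => ?_⟩
        by_cases h' : s = some r.1 <;> simp [plDec, plStep, h, h']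
      · refine ⟨some none, fun s => ?_⟩
        by_cases h' : s = some r.1 <;> simp [plDec, plStep, h, h']

/-- The syntactic congruence of the path language has at most `|Q|² + 2`
classes. -/
theorem pathLang_syntactic_monoid_card (Q : Type*) [Fintype Q] (q0 : Q) (F : Set Q) :
    Nat.card (Quotient (synSetoid q0 F)) ≤ Fintype.card Q ^ 2 + 2 := by
  choose c hc using (exists_code (Q := Q))
  have hinj : Function.Injective (fun a : Quotient (synSetoid q0 F) => c a.out) := by
    intro a b hab
    have hab' : c a.out = c b.out := hab
    rw [← Quotient.out_eq a, ← Quotient.out_eq b]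
    apply Quotient.sound
    intro u v
    simp only [mem_pathLang_iff, List.foldl_append, hc a.out, hc b.out, hab']
  have h := Nat.card_le_card_of_injective _ hinj
  have h2 : Nat.card (Option (Option (Q × Q))) = Fintype.card Q ^ 2 + 2 := by
    simp [Nat.card_eq_fintype_card, Fintype.card_option, Fintype.card_prod, sq]
  omega
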